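/- Let μ be a nonzero locally finite nonnegative Borel measure on ℝⁿ that is doubling with respect to the collection 𝔑 of all open rectangles with sides parallel to the coordinate axes (i.e. product-doubling). Then there exists a constant c > 0 such that μ({x ∈ ℝⁿ : M_{𝔑,μ}(1_E)(x) > 1/2}) ≤ c·μ(E) for every Borel set E ⊆ ℝⁿ if and only if there exists p > 1 such that M_{𝔑,μ} is bounded on L^p(μ). -/

import Mathlib

open MeasureTheory Set Filter
open scoped ENNReal Topology Pointwise

noncomputable section

/-- The maximal operator `M_{𝔅,μ}` associated to a measure `μ` and a collection `𝔅`
of subsets of `ℝⁿ`, applied to `f` at the point `x` (valued in `ℝ≥0∞`; it equals `0`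
outside the union of `𝔅`). -/
noncomputable def maxOp {n : ℕ} (μ : Measure (EuclideanSpace ℝ (Fin n)))
    (𝔅 : Set (Set (EuclideanSpace ℝ (Fin n))))
    (f : EuclideanSpace ℝ (Fin n) → ℝ) (x : EuclideanSpace ℝ (Fin n)) : ℝ≥0∞ :=
  ⨆ (B : Set (EuclideanSpace ℝ (Fin n))) (_ : B ∈ 𝔅) (_ : x ∈ B) (_ : 0 < μ B),
    (∫⁻ y in B, ENNReal.ofReal |f y| ∂μ) / μ B

/-- A collection of sets is homothecy invariant if it is closed under translations and
positive dilations. -/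
def HomothecyInvariant {n : ℕ} (𝔅 : Set (Set (EuclideanSpace ℝ (Fin n)))) : Prop :=
  ∀ B ∈ 𝔅, (∀ y : EuclideanSpace ℝ (Fin n), y +ᵥ B ∈ 𝔅) ∧ (∀ s : ℝ, 0 < s → s • B ∈ 𝔅)

/-- `μ` is doubling with respect to the collection `𝔅`, with constant `Δ`: whenever
`B ∈ 𝔅` and a translate of the dilate `2·B` contains `B`, its measure is at most
`Δ·μ(B)`. -/
def DoublingWrt {n : ℕ} (μ : Measure (EuclideanSpace ℝ (Fin n)))
    (𝔅 : Set (Set (EuclideanSpace ℝ (Fin n)))) (Δ : ℝ) : Prop :=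
  ∀ B ∈ 𝔅, ∀ σ : EuclideanSpace ℝ (Fin n),
    B ⊆ σ +ᵥ (2 : ℝ) • B → μ (σ +ᵥ (2 : ℝ) • B) ≤ ENNReal.ofReal Δ * μ B

/-- A member of a basis of convex sets: nonempty, bounded, open and convex. -/
def IsConvexBasisSet {n : ℕ} (B : Set (EuclideanSpace ℝ (Fin n))) : Prop :=
  B.Nonempty ∧ Bornology.IsBounded B ∧ IsOpen B ∧ Convex ℝ B

/-- An open axis-parallel rectangle in `ℝⁿ`. -/
def IsAxisRect {n : ℕ} (R : Set (EuclideanSpace ℝ (Fin n))) : Prop :=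
  ∃ a b : Fin n → ℝ, (∀ i, a i < b i) ∧ R = {x | ∀ i, x i ∈ Set.Ioo (a i) (b i)}

/-- An open rectangle (possibly rotated rectangular parallelepiped) in `ℝⁿ`:
the image of an open axis-parallel rectangle under a rigid motion. -/
def IsRect {n : ℕ} (R : Set (EuclideanSpace ℝ (Fin n))) : Prop :=
  ∃ (f : EuclideanSpace ℝ (Fin n) ≃ᵢ EuclideanSpace ℝ (Fin n))
    (S : Set (EuclideanSpace ℝ (Fin n))), IsAxisRect S ∧ R = f '' S

/-- An open axis-parallel cube in `ℝⁿ`. -/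
def IsAxisCube {n : ℕ} (C : Set (EuclideanSpace ℝ (Fin n))) : Prop :=
  ∃ (a : Fin n → ℝ) (s : ℝ), 0 < s ∧ C = {x | ∀ i, x i ∈ Set.Ioo (a i) (a i + s)}

/-- `M_{𝔅,μ}` is bounded on `L^p(ν)`. -/
def BoundedOnLp {n : ℕ} (μ ν : Measure (EuclideanSpace ℝ (Fin n)))
    (𝔅 : Set (Set (EuclideanSpace ℝ (Fin n)))) (p : ℝ) : Prop :=
  ∃ C : ℝ≥0∞, C ≠ ⊤ ∧ ∀ f : EuclideanSpace ℝ (Fin n) → ℝ, Measurable f →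
    ∫⁻ x, maxOp μ 𝔅 f x ^ p ∂ν ≤ C * ∫⁻ x, ENNReal.ofReal |f x| ^ p ∂ν

/-- The Tauberian condition for `M_{𝔅,μ}` at level `γ`, with constant `c`, with respect
to the measure `ν`. -/
def TauberianCond {n : ℕ} (μ ν : Measure (EuclideanSpace ℝ (Fin n)))
    (𝔅 : Set (Set (EuclideanSpace ℝ (Fin n)))) (γ c : ℝ) : Prop :=
  ∀ E : Set (EuclideanSpace ℝ (Fin n)), MeasurableSet E →
    ν {x | ENNReal.ofReal γ < maxOp μ 𝔅 (E.indicator 1) x} ≤ ENNReal.ofReal c * ν E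

/-- The standard open dyadic box of scale `2^k` and position `m` in `ℝⁿ`. -/
def stdBox (n : ℕ) (k : ℤ) (m : Fin n → ℤ) : Set (Fin n → ℝ) :=
  {x | ∀ i, (m i : ℝ) * 2 ^ k < x i ∧ x i < ((m i : ℝ) + 1) * 2 ^ k}

/-- A parametrization of a rectangular grid: a rigid motion composed with a positive
diagonal scaling. The image of the standard unit box under such a map is a rectangle. -/
def IsRectParam {n : ℕ} (T : (Fin n → ℝ) → EuclideanSpace ℝ (Fin n)) : Prop :=
  ∃ (f : EuclideanSpace ℝ (Fin n) ≃ᵢ EuclideanSpace ℝ (Fin n)) (l : Fin n → ℝ),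
    (∀ i, 0 < l i) ∧
    ∀ x, T x = f ((WithLp.equiv 2 (Fin n → ℝ)).symm (fun i => l i * x i))

/-- The dyadic mesh generated by a rectangle parametrized by `T`. -/
def dyadicMesh {n : ℕ} (T : (Fin n → ℝ) → EuclideanSpace ℝ (Fin n)) :
    Set (Set (EuclideanSpace ℝ (Fin n))) :=
  {S | ∃ (k : ℤ) (m : Fin n → ℤ), S = T '' stdBox n k m}

/-- `S` is a dyadic descendant of the rectangle `R`, `s` generations inside `R`. -/
def DyadicDescendant {n : ℕ} (R S : Set (EuclideanSpace ℝ (Fin n))) (s : ℕ) : Prop :=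
  ∃ T : (Fin n → ℝ) → EuclideanSpace ℝ (Fin n), IsRectParam T ∧
    T '' stdBox n 0 0 = R ∧
    ∃ m : Fin n → ℤ, (∀ i, 0 ≤ m i ∧ m i < 2 ^ s) ∧ S = T '' stdBox n (-(s : ℤ)) m

/-- The family of all homothetic copies (translates and positive dilates) of `R₀`. -/
def homCopies {n : ℕ} (R₀ : Set (EuclideanSpace ℝ (Fin n))) :
    Set (Set (EuclideanSpace ℝ (Fin n))) :=
  {S | ∃ (y : EuclideanSpace ℝ (Fin n)) (s : ℝ), 0 < s ∧ S = y +ᵥ s • R₀}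

/-- Iterated halo sets `H_β^k(E)`: `H_β^0(E) = E` and
`H_β^{k+1}(E) = {x : M_{𝔊,μ}(1_{H_β^k(E)})(x) ≥ β}`. -/
def Hiter {n : ℕ} (μ : Measure (EuclideanSpace ℝ (Fin n)))
    (𝔊 : Set (Set (EuclideanSpace ℝ (Fin n)))) (β : ℝ)
    (E : Set (EuclideanSpace ℝ (Fin n))) : ℕ → Set (EuclideanSpace ℝ (Fin n))
  | 0 => E
  | k + 1 => {x | ENNReal.ofReal β ≤ maxOp μ 𝔊 ((Hiter μ 𝔊 β E k).indicator 1) x}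

/-- The Muckenhoupt `A_{p,𝔅}` condition for a weight `w` (with respect to Lebesgue
measure); here `1 - p/(p-1) = 1 - p'`. -/
def MuckenhouptAp {n : ℕ} (𝔅 : Set (Set (EuclideanSpace ℝ (Fin n))))
    (w : EuclideanSpace ℝ (Fin n) → ℝ) (p : ℝ) : Prop :=
  ∃ C : ℝ≥0∞, C ≠ ⊤ ∧ ∀ B ∈ 𝔅,
    ((∫⁻ x in B, ENNReal.ofReal (w x) ∂volume) / volume B) *
      (((∫⁻ x in B, ENNReal.ofReal (w x) ^ (1 - p / (p - 1)) ∂volume) / volume B) ^ (p - 1))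
      ≤ C

/-- `𝔅` is a Muckenhoupt basis: for every `1 < p < ∞` and every weight `w ∈ A_{p,𝔅}`,
the maximal operator `M_𝔅` is bounded on `L^p(w)`. -/
def MuckenhouptBasis {n : ℕ} (𝔅 : Set (Set (EuclideanSpace ℝ (Fin n)))) : Prop :=
  ∀ p : ℝ, 1 < p → ∀ w : EuclideanSpace ℝ (Fin n) → ℝ, (∀ x, 0 ≤ w x) →
    LocallyIntegrable w volume → MuckenhouptAp 𝔅 w p →
    BoundedOnLp volume (volume.withDensity fun x => ENNReal.ofReal (w x)) 𝔅 p

end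

/-!
Iterate the halo operation `E ↦ {M 1_E > γ}`. If an open set `E` has density at most `γ` in a
rectangle `R`, stop a dyadic subdivision of `R` at every box in which `E` is denser than `γ`.
The halo of `E` contains such a box, and a further bounded number `k` of halos absorbs its dyadic
parent: rectangles can be grown with continuously increasing measure, because product doubling
forces every coordinate hyperplane to be null, and doubling bounds the total growth. Hence `k + 1`
halos multiply the measure of `E ∩ R` by at least `1 / γ`, so `(k + 1) m` halos cover every `R` in
which the density of `E` exceeds `γ ^ m`. The Tauberian condition bounds the measure of each halo,
which yields a polynomial bound for `μ {M 1_E > t}` as `t → 0`. Finally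
`M f ≤ ∫₀^∞ M 1_{|f| > s} ds` upgrades it to `L^p` for large `p`. The converse is Chebyshev's
inequality.
-/

section MeasureLemmas

theorem isOpen_lt_measure_superlevel {α : Type*} [MeasurableSpace α] (μ : Measure α) (f : α → ℝ)
    (c : ℝ≥0∞) : IsOpen {s : ℝ | c < μ {x | s < f x}} := by
  refine isOpen_iff_mem_nhds.2 fun s (hs : c < μ {x | s < f x}) => ?_
  have hunion : {x | s < f x} = ⋃ k : ℕ, {x | s + 1 / ((k : ℝ) + 1) < f x} := by
    ext x
    simp only [mem_ofPred_eq, mem_iUnion]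
    refine ⟨fun hx => ?_, fun ⟨k, hk⟩ => (lt_add_of_pos_right s (by positivity)).trans hk⟩
    obtain ⟨k, hk⟩ := exists_nat_one_div_lt (sub_pos.2 hx)
    exact ⟨k, by linarith⟩
  have hmono : Monotone fun k : ℕ => {x | s + 1 / ((k : ℝ) + 1) < f x} := fun k l hkl x hx => by
    have hkl' : 1 / ((l : ℝ) + 1) ≤ 1 / ((k : ℝ) + 1) := by gcongr
    exact (add_le_add_right hkl' s).trans_lt hx
  rw [hunion, hmono.measure_iUnion, lt_iSup_iff] at hs
  obtain ⟨k, hk⟩ := hs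
  filter_upwards [Iio_mem_nhds (lt_add_of_pos_right s (by positivity : 0 < 1 / ((k : ℝ) + 1)))]
    with t ht
  exact hk.trans_le (measure_mono fun x hx => (mem_Iio.1 ht).trans hx)

theorem lintegral_Ioi_le_of_le_rpow {a : ℝ → ℝ≥0∞} {T α : ℝ} (hT : 0 < T) (hα : 1 < α)
    (ha : ∀ s, a s ≤ 1) (haT : ∀ s, T < s → a s ≤ ENNReal.ofReal ((T / s) ^ α)) :
    ∫⁻ s in Ioi 0, a s ≤ ENNReal.ofReal (α / (α - 1) * T) := by
  have hα' : 0 < α - 1 := sub_pos.2 hα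
  have htail : ∫ s in Ioi T, T ^ α * s ^ (-α) = T / (α - 1) := by
    rw [integral_const_mul, integral_Ioi_rpow_of_lt (by linarith) hT, mul_div_assoc', mul_neg,
      ← Real.rpow_add hT, show α + (-α + 1) = 1 by ring, Real.rpow_one,
      show -α + 1 = -(α - 1) by ring, neg_div_neg_eq]
  calc ∫⁻ s in Ioi 0, a s
      ≤ (∫⁻ s in Ioc 0 T, a s) + ∫⁻ s in Ioi T, a s := by
        rw [← Ioc_union_Ioi_eq_Ioi hT.le]
        exact lintegral_union_le _ _ _
    _ ≤ (∫⁻ _ in Ioc 0 T, 1) + ∫⁻ s in Ioi T, ENNReal.ofReal (T ^ α * s ^ (-α)) := by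
        refine add_le_add (lintegral_mono ha) (setLIntegral_mono (by fun_prop) fun s hs => ?_)
        have hs0 : 0 < s := hT.trans hs
        rw [Real.rpow_neg hs0.le, ← div_eq_mul_inv, ← Real.div_rpow hT.le hs0.le]
        exact haT s hs
    _ = ENNReal.ofReal T + ENNReal.ofReal (T / (α - 1)) := by
        rw [setLIntegral_one, Real.volume_Ioc, sub_zero, ← htail,
          ofReal_integral_eq_lintegral_ofReal]
        · exact (integrableOn_Ioi_rpow_of_lt (by linarith) hT).const_mul _
        · filter_upwards [ae_restrict_mem measurableSet_Ioi] with s hs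
          have hs0 : 0 < s := hT.trans hs
          positivity
    _ = ENNReal.ofReal (α / (α - 1) * T) := by
        rw [← ENNReal.ofReal_add hT.le (by positivity)]
        congr 1
        field_simp
        ring

theorem mul_ofReal_rpow_le_lintegral_of_antitone {g : ℝ → ℝ≥0∞} (hg : Antitone g) {s p : ℝ}
    (hs : 0 ≤ s) (hp : 0 < p) :
    g s * ENNReal.ofReal (s ^ p) ≤
      ENNReal.ofReal p * ∫⁻ t in Ioi 0, g t * ENNReal.ofReal (t ^ (p - 1)) := by
  have hpow : ENNReal.ofReal (s ^ p) =
      ENNReal.ofReal p * ∫⁻ t in Ioc 0 s, ENNReal.ofReal (t ^ (p - 1)) := by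
    have hint : ∫ t in (0)..s, t ^ (p - 1) = s ^ p / p := by
      rw [integral_rpow (Or.inl (by linarith)), sub_add_cancel, Real.zero_rpow hp.ne', sub_zero]
    rw [← ofReal_integral_eq_lintegral_ofReal, ← intervalIntegral.integral_of_le hs, hint,
      ← ENNReal.ofReal_mul hp.le, mul_div_cancel₀ _ hp.ne']
    · exact (intervalIntegrable_iff_integrableOn_Ioc_of_le hs).1
        (intervalIntegral.intervalIntegrable_rpow' (by linarith))
    · filter_upwards [ae_restrict_mem measurableSet_Ioc] with t ht
      exact Real.rpow_nonneg ht.1.le _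
  rw [hpow, mul_left_comm, ← lintegral_const_mul _ (by fun_prop)]
  gcongr ENNReal.ofReal p * ?_
  calc ∫⁻ t in Ioc 0 s, g s * ENNReal.ofReal (t ^ (p - 1))
      ≤ ∫⁻ t in Ioc 0 s, g t * ENNReal.ofReal (t ^ (p - 1)) :=
        setLIntegral_mono' measurableSet_Ioc fun t ht => by gcongr; exact hg ht.2
    _ ≤ ∫⁻ t in Ioi 0, g t * ENNReal.ofReal (t ^ (p - 1)) := lintegral_mono_set Ioc_subset_Ioi_self

theorem rpow_lintegral_Ioi_le_of_rpow_mul_le {a : ℝ → ℝ≥0∞} (ha : ∀ s, a s ≤ 1) {r p : ℝ}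
    (hr : 0 < r) (hrp : r < p) {A : ℝ≥0∞}
    (haA : ∀ s, 0 < s → a s ^ r * ENNReal.ofReal (s ^ p) ≤ A) :
    (∫⁻ s in Ioi 0, a s) ^ p ≤ ENNReal.ofReal (p / (p - r)) ^ p * A := by
  have hp : 0 < p := hr.trans hrp
  have hpr : 0 < p / (p - r) := div_pos hp (sub_pos.2 hrp)
  have hweak : ∀ s, 0 < s → a s ^ r ≤ A / ENNReal.ofReal (s ^ p) := fun s hs => by
    rw [ENNReal.le_div_iff_mul_le (by simp [Real.rpow_pos_of_pos hs]) (by simp)]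
    exact haA s hs
  rcases eq_or_ne A ⊤ with rfl | hA
  · simp [ENNReal.mul_top, hpr]
  rcases eq_or_ne A 0 with rfl | hA0
  · have hzero : ∀ s ∈ Ioi (0 : ℝ), a s = 0 := fun s hs => by
      simpa [hr, hr.not_gt] using hweak s hs
    simp [setLIntegral_congr_fun measurableSet_Ioi hzero, hp]
  -- `T` is the point beyond which the weak-type bound improves on `a ≤ 1`.
  obtain ⟨T, hT, hTA⟩ : ∃ T : ℝ, 0 < T ∧ ENNReal.ofReal (T ^ p) = A :=
    ⟨A.toReal ^ p⁻¹, Real.rpow_pos_of_pos (ENNReal.toReal_pos hA0 hA) _, by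
      rw [Real.rpow_inv_rpow ENNReal.toReal_nonneg hp.ne', ENNReal.ofReal_toReal hA]⟩
  have hdecay : ∀ s, T < s → a s ≤ ENNReal.ofReal ((T / s) ^ (p / r)) := fun s hs => by
    have hs0 : 0 < s := hT.trans hs
    rw [← ENNReal.rpow_le_rpow_iff hr, ENNReal.ofReal_rpow_of_nonneg (by positivity) hr.le,
      ← Real.rpow_mul (by positivity), div_mul_cancel₀ p hr.ne', Real.div_rpow hT.le hs0.le,
      ENNReal.ofReal_div_of_pos (by positivity), hTA]
    exact hweak s hs0
  have hαeq : p / r / (p / r - 1) = p / (p - r) := by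
    field_simp
  have hle := lintegral_Ioi_le_of_le_rpow hT ((one_lt_div hr).2 hrp) ha hdecay
  rw [hαeq] at hle
  calc (∫⁻ s in Ioi 0, a s) ^ p
      ≤ ENNReal.ofReal (p / (p - r) * T) ^ p := ENNReal.rpow_le_rpow hle hp.le
    _ = ENNReal.ofReal (p / (p - r)) ^ p * A := by
        rw [ENNReal.ofReal_mul hpr.le, ENNReal.mul_rpow_of_nonneg _ _ hp.le, ← hTA,
          ENNReal.ofReal_rpow_of_pos hT]

theorem rpow_lintegral_Ioi_le {a : ℝ → ℝ≥0∞} (hanti : Antitone a) (ha : ∀ s, a s ≤ 1) {r p : ℝ}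
    (hr : 0 < r) (hrp : r < p) :
    (∫⁻ s in Ioi 0, a s) ^ p ≤ ENNReal.ofReal (p / (p - r)) ^ p *
      (ENNReal.ofReal p * ∫⁻ s in Ioi 0, a s ^ r * ENNReal.ofReal (s ^ (p - 1))) :=
  rpow_lintegral_Ioi_le_of_rpow_mul_le ha hr hrp fun _ hs =>
    mul_ofReal_rpow_le_lintegral_of_antitone
      (fun _ _ hst => ENNReal.rpow_le_rpow (hanti hst) hr.le) hs.le (hr.trans hrp)

theorem setLIntegral_div_eq_lintegral_cond {α : Type*} [MeasurableSpace α] (μ : Measure α)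
    (g : α → ℝ≥0∞) (B : Set α) :
    (∫⁻ y in B, g y ∂μ) / μ B = ∫⁻ y, g y ∂ProbabilityTheory.cond μ B := by
  rw [ProbabilityTheory.cond, lintegral_smul_measure, smul_eq_mul, ENNReal.div_eq_inv_mul]

theorem ofReal_abs_indicator_one {α : Type*} (E : Set α) (y : α) :
    ENNReal.ofReal |E.indicator (1 : α → ℝ) y| = E.indicator 1 y := by
  by_cases hy : y ∈ E <;> simp [hy]

end MeasureLemmas

section MaximalOperator

open scoped ProbabilityTheory

variable {n : ℕ} {μ ν : Measure (EuclideanSpace ℝ (Fin n))}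
  {𝔅 : Set (Set (EuclideanSpace ℝ (Fin n)))}

theorem lt_maxOp_iff {f : EuclideanSpace ℝ (Fin n) → ℝ} {x : EuclideanSpace ℝ (Fin n)}
    {c : ℝ≥0∞} : c < maxOp μ 𝔅 f x ↔
      ∃ B ∈ 𝔅, x ∈ B ∧ 0 < μ B ∧ c < ∫⁻ y, ENNReal.ofReal |f y| ∂μ[|B] := by
  simp only [maxOp, lt_iSup_iff, setLIntegral_div_eq_lintegral_cond, exists_prop]

theorem lt_maxOp_indicator_iff {E : Set (EuclideanSpace ℝ (Fin n))} (hE : MeasurableSet E)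
    {x : EuclideanSpace ℝ (Fin n)} {c : ℝ≥0∞} :
    c < maxOp μ 𝔅 (E.indicator 1) x ↔ ∃ B ∈ 𝔅, x ∈ B ∧ 0 < μ B ∧ c < μ[|B] E := by
  simp only [lt_maxOp_iff, ofReal_abs_indicator_one, lintegral_indicator_one hE]

theorem maxOp_indicator_mono {E F : Set (EuclideanSpace ℝ (Fin n))} (hEF : E ⊆ F)
    (x : EuclideanSpace ℝ (Fin n)) :
    maxOp μ 𝔅 (E.indicator 1) x ≤ maxOp μ 𝔅 (F.indicator 1) x := by
  simp only [maxOp, ofReal_abs_indicator_one]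
  gcongr with B _ _ _ y

theorem maxOp_indicator_le_one (E : Set (EuclideanSpace ℝ (Fin n)))
    (x : EuclideanSpace ℝ (Fin n)) : maxOp μ 𝔅 (E.indicator 1) x ≤ 1 := by
  refine iSup₂_le fun B _ => iSup₂_le fun _ _ => ?_
  calc (∫⁻ y in B, ENNReal.ofReal |E.indicator (1 : EuclideanSpace ℝ (Fin n) → ℝ) y| ∂μ) / μ B
      ≤ (∫⁻ _ in B, 1 ∂μ) / μ B := by
        gcongr with y
        rw [ofReal_abs_indicator_one]
        exact indicator_le_self' (fun _ _ => zero_le) y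
    _ ≤ 1 := by
        rw [setLIntegral_one]
        exact ENNReal.div_self_le_one

theorem isOpen_lt_maxOp (h𝔅 : ∀ B ∈ 𝔅, IsOpen B) (f : EuclideanSpace ℝ (Fin n) → ℝ)
    (c : ℝ≥0∞) : IsOpen {x | c < maxOp μ 𝔅 f x} := by
  refine isOpen_iff_mem_nhds.2 fun x hx => ?_
  obtain ⟨B, hB, hxB, hBpos, hc⟩ := lt_maxOp_iff.1 hx
  filter_upwards [(h𝔅 B hB).mem_nhds hxB] with y hy
  exact lt_maxOp_iff.2 ⟨B, hB, hy, hBpos, hc⟩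

theorem measurable_maxOp (h𝔅 : ∀ B ∈ 𝔅, IsOpen B) (f : EuclideanSpace ℝ (Fin n) → ℝ) :
    Measurable (maxOp μ 𝔅 f) :=
  measurable_of_Ioi fun c => (isOpen_lt_maxOp h𝔅 f c).measurableSet

theorem measurable_maxOp_superlevel (h𝔅 : ∀ B ∈ 𝔅, IsOpen B)
    {f : EuclideanSpace ℝ (Fin n) → ℝ} (hf : Measurable f) :
    Measurable fun q : EuclideanSpace ℝ (Fin n) × ℝ =>
      maxOp μ 𝔅 ({y | q.2 < f y}.indicator 1) q.1 := by
  refine measurable_of_Ioi fun c => IsOpen.measurableSet (isOpen_iff_mem_nhds.2 ?_)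
  rintro ⟨x, s⟩ hxs
  have hsuper : ∀ s, MeasurableSet {y | s < f y} := fun s => measurableSet_lt measurable_const hf
  obtain ⟨B, hB, hxB, hBpos, hc⟩ := (lt_maxOp_indicator_iff (hsuper s)).1 hxs
  have hs : ∀ᶠ t in 𝓝 s, c < μ[|B] {y | t < f y} :=
    (isOpen_lt_measure_superlevel μ[|B] f c).mem_nhds hc
  filter_upwards [((h𝔅 B hB).eventually_mem hxB).prod_nhds hs] with q hq
  exact (lt_maxOp_indicator_iff (hsuper q.2)).2 ⟨B, hB, hq.1, hBpos, hq.2⟩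

theorem maxOp_le_lintegral_maxOp_superlevel {f : EuclideanSpace ℝ (Fin n) → ℝ}
    (hf : Measurable f) (x : EuclideanSpace ℝ (Fin n)) :
    maxOp μ 𝔅 f x ≤ ∫⁻ s in Ioi 0, maxOp μ 𝔅 ({y | s < |f y|}.indicator 1) x := by
  refine le_of_forall_lt fun c hc => ?_
  obtain ⟨B, hB, hxB, hBpos, hcB⟩ := lt_maxOp_iff.1 hc
  rw [lintegral_eq_lintegral_meas_lt _ (ae_of_all _ fun y => abs_nonneg (f y))
    hf.abs.aemeasurable] at hcB
  refine hcB.trans_le (lintegral_mono fun s => le_of_forall_lt fun d hd => ?_)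
  exact (lt_maxOp_indicator_iff (measurableSet_lt measurable_const hf.abs)).2
    ⟨B, hB, hxB, hBpos, hd⟩

theorem antitone_maxOp_superlevel (f : EuclideanSpace ℝ (Fin n) → ℝ)
    (x : EuclideanSpace ℝ (Fin n)) :
    Antitone fun s : ℝ => maxOp μ 𝔅 ({y | s < f y}.indicator 1) x := fun s t hst =>
  maxOp_indicator_mono (fun y (hy : t < f y) => show s < f y from hst.trans_lt hy) x

theorem lintegral_maxOp_rpow_le [SFinite ν] (h𝔅 : ∀ B ∈ 𝔅, IsOpen B) {r p : ℝ} (hr : 0 < r)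
    (hrp : r < p) {f : EuclideanSpace ℝ (Fin n) → ℝ} (hf : Measurable f) :
    ∫⁻ x, maxOp μ 𝔅 f x ^ p ∂ν ≤ ENNReal.ofReal (p / (p - r)) ^ p * (ENNReal.ofReal p *
      ∫⁻ s in Ioi 0, (∫⁻ x, maxOp μ 𝔅 ({y | s < |f y|}.indicator 1) x ^ r ∂ν) *
        ENNReal.ofReal (s ^ (p - 1))) := by
  have hmeas : Measurable fun q : EuclideanSpace ℝ (Fin n) × ℝ =>
      maxOp μ 𝔅 ({y | q.2 < |f y|}.indicator 1) q.1 ^ r * ENNReal.ofReal (q.2 ^ (p - 1)) :=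
    ((measurable_maxOp_superlevel h𝔅 hf.abs).pow_const r).mul (by fun_prop)
  have hpointwise : ∀ x, maxOp μ 𝔅 f x ^ p ≤
      ENNReal.ofReal (p / (p - r)) ^ p * (ENNReal.ofReal p * ∫⁻ s in Ioi 0,
        maxOp μ 𝔅 ({y | s < |f y|}.indicator 1) x ^ r * ENNReal.ofReal (s ^ (p - 1))) :=
    fun x => (ENNReal.rpow_le_rpow (maxOp_le_lintegral_maxOp_superlevel hf x)
      (hr.trans hrp).le).trans <| rpow_lintegral_Ioi_le
        (antitone_maxOp_superlevel (fun y => |f y|) x)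
        (fun s => maxOp_indicator_le_one _ x) hr hrp
  refine (lintegral_mono hpointwise).trans_eq ?_
  have hinner := hmeas.lintegral_prod_right' (ν := volume.restrict (Ioi 0))
  rw [lintegral_const_mul _ (hinner.const_mul _), lintegral_const_mul _ hinner,
    lintegral_lintegral_swap hmeas.aemeasurable]
  simp only [lintegral_mul_const _ ((measurable_maxOp h𝔅 _).pow_const r)]

theorem boundedOnLp_of_lintegral_maxOp_indicator_rpow_le [SFinite ν]
    (h𝔅 : ∀ B ∈ 𝔅, IsOpen B) {r p : ℝ} (hr : 0 < r) (hrp : r < p) {C : ℝ≥0∞} (hC : C ≠ ⊤)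
    (hweak : ∀ E, MeasurableSet E → ∫⁻ x, maxOp μ 𝔅 (E.indicator 1) x ^ r ∂ν ≤ C * ν E) :
    BoundedOnLp μ ν 𝔅 p := by
  have hp : 0 < p := hr.trans hrp
  refine ⟨ENNReal.ofReal (p / (p - r)) ^ p * C,
    ENNReal.mul_ne_top (ENNReal.rpow_ne_top_of_nonneg hp.le ENNReal.ofReal_ne_top) hC,
    fun f hf => (lintegral_maxOp_rpow_le h𝔅 hr hrp hf).trans ?_⟩
  rw [mul_assoc]
  gcongr _ * ?_
  calc ENNReal.ofReal p *
        ∫⁻ s in Ioi 0, (∫⁻ x, maxOp μ 𝔅 ({y | s < |f y|}.indicator 1) x ^ r ∂ν) *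
          ENNReal.ofReal (s ^ (p - 1))
      ≤ ENNReal.ofReal p *
          ∫⁻ s in Ioi 0, C * ν {y | s < |f y|} * ENNReal.ofReal (s ^ (p - 1)) := by
        gcongr with s
        exact hweak _ (measurableSet_lt measurable_const hf.abs)
    _ = C * ∫⁻ x, ENNReal.ofReal |f x| ^ p ∂ν := by
        simp_rw [mul_assoc]
        rw [lintegral_const_mul' _ _ hC, mul_left_comm,
          ← lintegral_rpow_eq_lintegral_meas_lt_mul ν (ae_of_all _ fun y => abs_nonneg (f y))
            hf.abs.aemeasurable hp]
        simp_rw [ENNReal.ofReal_rpow_of_nonneg (abs_nonneg _) hp.le]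

theorem BoundedOnLp.exists_tauberianCond (h𝔅 : ∀ B ∈ 𝔅, IsOpen B) {p γ : ℝ} (hp : 0 < p)
    (hγ : 0 < γ) (h : BoundedOnLp μ ν 𝔅 p) : ∃ c, 0 < c ∧ TauberianCond μ ν 𝔅 γ c := by
  obtain ⟨C, hC, hbound⟩ := h
  have hγp : ENNReal.ofReal γ ^ p ≠ 0 :=
    (ENNReal.rpow_pos (ENNReal.ofReal_pos.2 hγ) ENNReal.ofReal_ne_top).ne'
  have hγp' : ENNReal.ofReal γ ^ p ≠ ⊤ := ENNReal.rpow_ne_top_of_nonneg hp.le ENNReal.ofReal_ne_top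
  refine ⟨(C / ENNReal.ofReal γ ^ p).toReal + 1, by positivity, fun E hE => ?_⟩
  have hCle : C / ENNReal.ofReal γ ^ p ≤
      ENNReal.ofReal ((C / ENNReal.ofReal γ ^ p).toReal + 1) := by
    rw [ENNReal.le_ofReal_iff_toReal_le (ENNReal.div_ne_top hC hγp) (by positivity)]
    exact (lt_add_one _).le
  calc ν {x | ENNReal.ofReal γ < maxOp μ 𝔅 (E.indicator 1) x}
      ≤ ν {x | ENNReal.ofReal γ ^ p ≤ maxOp μ 𝔅 (E.indicator 1) x ^ p} :=
        measure_mono fun x hx => ENNReal.rpow_le_rpow (le_of_lt hx) hp.le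
    _ ≤ (∫⁻ x, maxOp μ 𝔅 (E.indicator 1) x ^ p ∂ν) / ENNReal.ofReal γ ^ p :=
        meas_ge_le_lintegral_div ((measurable_maxOp h𝔅 _).pow_const p).aemeasurable hγp hγp'
    _ ≤ C * ν E / ENNReal.ofReal γ ^ p := by
        gcongr
        refine (hbound _ (measurable_one.indicator hE)).trans_eq ?_
        have hpow : ∀ x, E.indicator (1 : EuclideanSpace ℝ (Fin n) → ℝ≥0∞) x ^ p =
            E.indicator 1 x := fun x => by by_cases hx : x ∈ E <;> simp [hx, hp]
        simp only [ofReal_abs_indicator_one, hpow, lintegral_indicator_one hE]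
    _ = C / ENNReal.ofReal γ ^ p * ν E := by
        simp only [div_eq_mul_inv, mul_right_comm]
    _ ≤ _ := by gcongr

end MaximalOperator

section LevelSets

theorem pow_le_tsum_indicator_pow_lt {γ y : ℝ≥0∞} (hγ : γ < 1) (hy : y ≤ 1) {r : ℕ} (hr : r ≠ 0) :
    y ^ r ≤ ∑' m : ℕ, {z | γ ^ (m + 1) < z}.indicator (fun _ => (γ ^ r) ^ m) y := by
  rcases eq_or_ne y 0 with rfl | hy0
  · simp [hr]
  classical
  have hex : ∃ m : ℕ, γ ^ m < y :=
    ((ENNReal.tendsto_pow_atTop_nhds_zero_of_lt_one hγ).eventually_lt_const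
      (pos_iff_ne_zero.2 hy0)).exists
  obtain ⟨m, hm⟩ : ∃ m, Nat.find hex = m + 1 := Nat.exists_eq_succ_of_ne_zero fun h => by
    simpa [h, hy.not_gt] using Nat.find_spec hex
  have hlt : γ ^ (m + 1) < y := hm ▸ Nat.find_spec hex
  have hle : y ≤ γ ^ m := not_lt.1 (Nat.find_min hex (hm ▸ m.lt_succ_self))
  calc y ^ r ≤ (γ ^ m) ^ r := by gcongr
    _ = {z | γ ^ (m + 1) < z}.indicator (fun _ => (γ ^ r) ^ m) y := by
      rw [indicator_of_mem (show y ∈ {z | γ ^ (m + 1) < z} from hlt), pow_right_comm]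
    _ ≤ _ := ENNReal.le_tsum m

theorem lintegral_pow_le_of_measure_pow_lt_le {α : Type*} [MeasurableSpace α] {ν : Measure α}
    {g : α → ℝ≥0∞} (hg : Measurable g) (hg1 : ∀ x, g x ≤ 1) {γ K A : ℝ≥0∞} (hγ : γ < 1)
    (hlevel : ∀ m : ℕ, ν {x | γ ^ m < g x} ≤ K ^ m * A) {r : ℕ} (hr : r ≠ 0)
    (hrK : γ ^ r * K ≤ 2⁻¹) : ∫⁻ x, g x ^ r ∂ν ≤ 2 * K * A := by
  have hset : ∀ m : ℕ, MeasurableSet {x | γ ^ (m + 1) < g x} :=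
    fun m => measurableSet_lt measurable_const hg
  calc ∫⁻ x, g x ^ r ∂ν
      ≤ ∫⁻ x, ∑' m : ℕ, {x | γ ^ (m + 1) < g x}.indicator (fun _ => (γ ^ r) ^ m) x ∂ν :=
        lintegral_mono fun x => pow_le_tsum_indicator_pow_lt hγ (hg1 x) hr
    _ = ∑' m : ℕ, (γ ^ r) ^ m * ν {x | γ ^ (m + 1) < g x} := by
        rw [lintegral_tsum fun m => (measurable_const.indicator (hset m)).aemeasurable]
        simp_rw [lintegral_indicator_const (hset _)]
    _ ≤ ∑' m : ℕ, 2⁻¹ ^ m * (K * A) := by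
        refine ENNReal.tsum_le_tsum fun m => ?_
        calc (γ ^ r) ^ m * ν {x | γ ^ (m + 1) < g x}
            ≤ (γ ^ r) ^ m * (K ^ (m + 1) * A) := by
              gcongr
              exact hlevel (m + 1)
          _ = (γ ^ r * K) ^ m * (K * A) := by ring
          _ ≤ 2⁻¹ ^ m * (K * A) := by gcongr
    _ = 2 * K * A := by
        rw [ENNReal.tsum_mul_right, ENNReal.tsum_geometric_two, mul_assoc]

theorem exists_pow_mul_le {γ K ε : ℝ≥0∞} (hγ : γ < 1) (hK : K ≠ ⊤) (hε : 0 < ε) :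
    ∃ r : ℕ, r ≠ 0 ∧ γ ^ r * K ≤ ε := by
  have htendsto : Tendsto (fun r => γ ^ r * K) atTop (𝓝 0) := by
    simpa using ENNReal.Tendsto.mul_const
      (ENNReal.tendsto_pow_atTop_nhds_zero_of_lt_one hγ) (Or.inr hK)
  obtain ⟨r, hrK, hr⟩ := ((htendsto.eventually_le_const hε).and (eventually_ne_atTop 0)).exists
  exact ⟨r, hr, hrK⟩

end LevelSets

theorem exists_boundedOnLp_of_measure_pow_lt_maxOp_le {n : ℕ}
    {μ ν : Measure (EuclideanSpace ℝ (Fin n))} [SFinite ν]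
    {𝔅 : Set (Set (EuclideanSpace ℝ (Fin n)))} (h𝔅 : ∀ B ∈ 𝔅, IsOpen B) {γ K : ℝ≥0∞}
    (hγ : γ < 1) (hK : K ≠ ⊤) (hlevel : ∀ (m : ℕ) (E), MeasurableSet E →
      ν {x | γ ^ m < maxOp μ 𝔅 (E.indicator 1) x} ≤ K ^ m * ν E) :
    ∃ p, 1 < p ∧ BoundedOnLp μ ν 𝔅 p := by
  obtain ⟨r, hr, hrK⟩ := exists_pow_mul_le hγ hK (ε := 2⁻¹) (by simp)
  have hr0 : (0 : ℝ) < r := by positivity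
  refine ⟨r + 1, by linarith, boundedOnLp_of_lintegral_maxOp_indicator_rpow_le h𝔅 hr0
    (lt_add_one _) (C := 2 * K) (by finiteness) fun E hE => ?_⟩
  simp_rw [ENNReal.rpow_natCast]
  exact lintegral_pow_le_of_measure_pow_lt_le (measurable_maxOp h𝔅 _) (maxOp_indicator_le_one E) hγ
    (fun m => hlevel m E hE) hr hrK

section AxisRectangles

variable {n : ℕ} {a b a' b' : Fin n → ℝ}

/-- The open axis-parallel rectangle `∏ᵢ (aᵢ, bᵢ)`, with no condition on `a` and `b`: it is empty
as soon as `bᵢ ≤ aᵢ` for some `i`. -/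
def openRect (a b : Fin n → ℝ) : Set (EuclideanSpace ℝ (Fin n)) :=
  {x | ∀ i, x i ∈ Ioo (a i) (b i)}

theorem isAxisRect_openRect (hab : ∀ i, a i < b i) : IsAxisRect (openRect a b) :=
  ⟨a, b, hab, rfl⟩

theorem isOpen_openRect (a b : Fin n → ℝ) : IsOpen (openRect a b) := by
  simp only [openRect, ofPred_forall]
  exact isOpen_iInter_of_finite fun i => isOpen_Ioo.preimage (by fun_prop)

theorem IsAxisRect.isOpen {R : Set (EuclideanSpace ℝ (Fin n))} (hR : IsAxisRect R) : IsOpen R := by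
  obtain ⟨a, b, -, rfl⟩ := hR
  exact isOpen_openRect a b

theorem measurableSet_openRect (a b : Fin n → ℝ) : MeasurableSet (openRect a b) :=
  (isOpen_openRect a b).measurableSet

theorem openRect_subset_openRect (ha : a' ≤ a) (hb : b ≤ b') : openRect a b ⊆ openRect a' b' :=
  fun _ hx i => Ioo_subset_Ioo (ha i) (hb i) (hx i)

theorem openRect_sub_add_eq_preimage_ball (c : Fin n → ℝ) {r : ℝ} (hr : 0 < r) :
    openRect (fun i => c i - r) (fun i => c i + r) = WithLp.ofLp ⁻¹' Metric.ball c r := by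
  ext x
  simp only [openRect, mem_preimage, Metric.mem_ball, dist_pi_lt_iff hr, ← Real.ball_eq_Ioo,
    mem_ofPred_eq]

theorem exists_openRect_sub_add_subset {U : Set (EuclideanSpace ℝ (Fin n))} (hU : IsOpen U)
    {x : EuclideanSpace ℝ (Fin n)} (hx : x ∈ U) :
    ∃ r, 0 < r ∧ openRect (fun i => x i - r) (fun i => x i + r) ⊆ U := by
  have hU' : IsOpen (WithLp.toLp 2 ⁻¹' U) := hU.preimage (PiLp.continuous_toLp 2 _)
  obtain ⟨r, hr, hball⟩ := Metric.isOpen_iff.1 hU' x.ofLp hx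
  refine ⟨r, hr, ?_⟩
  rw [openRect_sub_add_eq_preimage_ball _ hr]
  exact fun y hy => hball hy

theorem measure_openRect_lt_top (μ : Measure (EuclideanSpace ℝ (Fin n)))
    [IsLocallyFiniteMeasure μ] (a b : Fin n → ℝ) : μ (openRect a b) < ⊤ := by
  have hcompact : IsCompact (WithLp.toLp 2 '' Icc a b) :=
    isCompact_Icc.image (PiLp.continuous_toLp 2 _)
  refine (measure_mono fun x hx => ?_).trans_lt hcompact.measure_lt_top
  exact ⟨x.ofLp, ⟨fun i => (hx i).1.le, fun i => (hx i).2.le⟩, rfl⟩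

theorem eventually_lt_iff_lt_of_ne {α : Type*} {l : Filter α} {f : α → ℝ} {u t : ℝ}
    (hf : Tendsto f l (𝓝 u)) (hne : t ≠ u) : ∀ᶠ x in l, (f x < t ↔ u < t) ∧ (t < f x ↔ t < u) := by
  rcases hne.lt_or_gt with hlt | hgt
  · filter_upwards [hf.eventually_const_lt hlt] with x hx
    exact ⟨iff_of_false hx.not_gt hlt.not_gt, iff_of_true hx hlt⟩
  · filter_upwards [hf.eventually_lt_const hgt] with x hx
    exact ⟨iff_of_true hx hgt, iff_of_false hx.not_gt hgt.not_gt⟩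

theorem eventually_mem_openRect_iff {x : EuclideanSpace ℝ (Fin n)}
    (hx : ∀ i, x i ≠ a i ∧ x i ≠ b i) :
    ∀ᶠ p in 𝓝 (a, b), (x ∈ openRect p.1 p.2 ↔ x ∈ openRect a b) := by
  have hfst : ∀ i, Tendsto (fun p : (Fin n → ℝ) × (Fin n → ℝ) => p.1 i) (𝓝 (a, b)) (𝓝 (a i)) :=
    fun i => Continuous.tendsto' (by fun_prop) _ _ rfl
  have hsnd : ∀ i, Tendsto (fun p : (Fin n → ℝ) × (Fin n → ℝ) => p.2 i) (𝓝 (a, b)) (𝓝 (b i)) :=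
    fun i => Continuous.tendsto' (by fun_prop) _ _ rfl
  filter_upwards [eventually_all.2 fun i => eventually_lt_iff_lt_of_ne (hfst i) (hx i).1,
    eventually_all.2 fun i => eventually_lt_iff_lt_of_ne (hsnd i) (hx i).2] with p ha hb
  exact forall_congr' fun i => and_congr (ha i).1 (hb i).2

theorem continuous_measure_openRect {μ : Measure (EuclideanSpace ℝ (Fin n))}
    [IsLocallyFiniteMeasure μ] (hnull : ∀ (i : Fin n) (t : ℝ), μ {x | x i = t} = 0) :
    Continuous fun p : (Fin n → ℝ) × (Fin n → ℝ) => μ (openRect p.1 p.2) := by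
  refine continuous_iff_continuousAt.2 fun ⟨a, b⟩ => ?_
  refine tendsto_measure_of_ae_tendsto_indicator _ (measurableSet_openRect a b)
    (fun p => measurableSet_openRect p.1 p.2)
    (measurableSet_openRect (fun i => a i - 1) (fun i => b i + 1))
    (measure_openRect_lt_top μ _ _).ne ?_ ?_
  · have hball : Metric.ball a 1 ×ˢ Metric.ball b 1 ∈ 𝓝 (a, b) :=
      prod_mem_nhds (Metric.ball_mem_nhds a one_pos) (Metric.ball_mem_nhds b one_pos)
    filter_upwards [hball] with p ⟨hpa, hpb⟩
    refine openRect_subset_openRect (fun i => ?_) (fun i => ?_)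
    · linarith [abs_lt.1 ((dist_pi_lt_iff one_pos).1 hpa i)]
    · linarith [abs_lt.1 ((dist_pi_lt_iff one_pos).1 hpb i)]
  · have hbdry : ∀ᵐ x ∂μ, ∀ i, x i ≠ a i ∧ x i ≠ b i :=
      ae_all_iff.2 fun i => (measure_eq_zero_iff_ae_notMem.1 (hnull i (a i))).and
        (measure_eq_zero_iff_ae_notMem.1 (hnull i (b i)))
    filter_upwards [hbdry] with x hx using eventually_mem_openRect_iff hx

theorem exists_measure_openRect_eq {μ : Measure (EuclideanSpace ℝ (Fin n))}
    [IsLocallyFiniteMeasure μ] (hnull : ∀ (i : Fin n) (t : ℝ), μ {x | x i = t} = 0)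
    (ha : a' ≤ a) (hb : b ≤ b') {γ c : ℝ≥0∞} (hγ : γ ≠ ⊤) (hc : γ * μ (openRect a b) ≤ c)
    (hc' : c ≤ γ * μ (openRect a' b')) :
    ∃ u v, a' ≤ u ∧ u ≤ a ∧ b ≤ v ∧ v ≤ b' ∧ γ * μ (openRect u v) = c := by
  have hcont : Continuous fun p : (Fin n → ℝ) × (Fin n → ℝ) => γ * μ (openRect p.1 p.2) :=
    (ENNReal.continuous_const_mul hγ).comp (continuous_measure_openRect hnull)
  have hconn : IsPreconnected (Icc (a', b) (a, b')) := (convex_Icc _ _).isPreconnected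
  obtain ⟨⟨u, v⟩, ⟨⟨hu, hv⟩, ⟨hu', hv'⟩⟩, huv⟩ := hconn.intermediate_value
    (a := (a, b)) (b := (a', b')) ⟨⟨ha, le_rfl⟩, ⟨le_rfl, hb⟩⟩ ⟨⟨le_rfl, hb⟩, ⟨ha, le_rfl⟩⟩
    hcont.continuousOn ⟨hc, hc'⟩
  exact ⟨u, v, hu, hu', hv, hv', huv⟩

end AxisRectangles

section Doubling

variable {n : ℕ} {μ : Measure (EuclideanSpace ℝ (Fin n))} {Δ : ℝ}

theorem DoublingWrt.measure_openRect_le (hd : DoublingWrt μ {R | IsAxisRect R} Δ)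
    {a b a' b' : Fin n → ℝ} (hab : ∀ i, a i < b i) (ha : a' ≤ a) (hb : b ≤ b')
    (hdouble : ∀ i, b' i - a' i = 2 * (b i - a i)) :
    μ (openRect a' b') ≤ ENNReal.ofReal Δ * μ (openRect a b) := by
  have hdilate : (WithLp.toLp 2 fun i => a' i - 2 * a i) +ᵥ (2 : ℝ) • openRect a b =
      openRect a' b' := by
    ext x
    rw [mem_vadd_set_iff_neg_vadd_mem, mem_smul_set_iff_inv_smul_mem₀ two_ne_zero]
    refine forall_congr' fun i => ?_
    have hi := hdouble i
    simp only [vadd_eq_add, PiLp.smul_apply, PiLp.add_apply, PiLp.neg_apply, smul_eq_mul, mem_Ioo]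
    constructor <;> rintro ⟨hl, hr⟩ <;> constructor <;> linarith
  have hdoubling := hd _ (isAxisRect_openRect hab) (WithLp.toLp 2 fun i => a' i - 2 * a i)
  rw [hdilate] at hdoubling
  exact hdoubling (openRect_subset_openRect ha hb)

theorem DoublingWrt.eq_zero_of_measure_openRect_eq_zero (hd : DoublingWrt μ {R | IsAxisRect R} Δ)
    {c : Fin n → ℝ} {r : ℝ} (hr : 0 < r)
    (hzero : μ (openRect (fun i => c i - r) (fun i => c i + r)) = 0) : μ = 0 := by
  have hr' : ∀ k : ℕ, 0 < 2 ^ k * r := fun k => by positivity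
  have hdilates : ∀ k : ℕ,
      μ (openRect (fun i => c i - 2 ^ k * r) (fun i => c i + 2 ^ k * r)) = 0 := fun k => by
    induction k with
    | zero => simpa using hzero
    | succ k ih =>
      have hle := hd.measure_openRect_le (a' := fun i => c i - 2 ^ (k + 1) * r)
        (b' := fun i => c i + 2 ^ (k + 1) * r)
        (fun i => by linarith [hr' k] : ∀ i, c i - 2 ^ k * r < c i + 2 ^ k * r)
        (fun i => by simp only [pow_succ]; linarith [hr' k])
        (fun i => by simp only [pow_succ]; linarith [hr' k]) (fun i => by ring)
      simpa [ih] using hle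
  rw [← Measure.measure_univ_eq_zero]
  refine measure_mono_null (fun x _ => ?_) (measure_iUnion_null hdilates)
  obtain ⟨k, hk⟩ := pow_unbounded_of_one_lt (dist x.ofLp c / r) one_lt_two
  refine mem_iUnion.2 ⟨k, ?_⟩
  rw [openRect_sub_add_eq_preimage_ball c (hr' k)]
  exact (div_lt_iff₀ hr).1 hk

theorem DoublingWrt.isOpenPosMeasure (hd : DoublingWrt μ {R | IsAxisRect R} Δ) (hμ : μ ≠ 0) :
    μ.IsOpenPosMeasure := by
  refine ⟨fun U hU ⟨x, hx⟩ hzero => hμ ?_⟩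
  obtain ⟨r, hr, hsub⟩ := exists_openRect_sub_add_subset hU hx
  exact hd.eq_zero_of_measure_openRect_eq_zero hr (measure_mono_null hsub hzero)

theorem tendsto_measure_openRect_update [IsLocallyFiniteMeasure μ] (a b : Fin n → ℝ) (i : Fin n)
    (c : ℝ) : Tendsto (fun t => μ (openRect (Function.update a i c) (Function.update b i (c + t))))
      (𝓝[>] 0) (𝓝 0) := by
  have hempty : ⋂ t > 0, openRect (Function.update a i c) (Function.update b i (c + t)) = ∅ := by
    refine eq_empty_of_forall_notMem fun x hx => ?_
    simp only [mem_iInter] at hx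
    have hlt : c < x i := by simpa using (hx 1 one_pos i).1
    simpa using (hx (x i - c) (sub_pos.2 hlt) i).2
  rw [← measure_empty (μ := μ), ← hempty]
  refine tendsto_measure_biInter_gt (fun t _ => (measurableSet_openRect _ _).nullMeasurableSet)
    (fun s t _ hst => openRect_subset_openRect le_rfl ?_)
    ⟨1, one_pos, (measure_openRect_lt_top μ _ _).ne⟩
  exact update_le_update_iff.2 ⟨by gcongr, fun _ _ => le_rfl⟩

theorem DoublingWrt.measure_hyperplane_inter_openRect_le
    (hd : DoublingWrt μ {R | IsAxisRect R} Δ) (z : Fin n → ℝ) (i : Fin n) (c : ℝ) {t : ℝ}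
    (ht : 0 < t) :
    μ ({x | x i = c} ∩ openRect (fun j => z j - 1) (fun j => z j + 1)) ≤ ENNReal.ofReal Δ *
      μ (openRect (Function.update (fun j => z j - 1) i c)
        (Function.update (fun j => z j + 1) i (c + t))) := by
  refine (measure_mono ?_).trans (hd.measure_openRect_le
    (a' := Function.update (fun j => z j - 2) i (c - t))
    (b' := Function.update (fun j => z j + 2) i (c + t)) ?_ ?_ ?_ ?_)
  · rintro x ⟨hx : x i = c, hxQ⟩ j
    rcases eq_or_ne j i with rfl | hj
    · simp [hx, ht]
    · simpa [hj] using Ioo_subset_Ioo (by linarith) (by linarith) (hxQ j)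
  · intro j
    rcases eq_or_ne j i with rfl | hj
    · simpa using ht
    · simp only [Function.update_of_ne hj]
      linarith
  · exact update_le_update_iff.2 ⟨by linarith, fun j _ => by linarith⟩
  · exact update_le_update_iff.2 ⟨le_rfl, fun j _ => by linarith⟩
  · intro j
    rcases eq_or_ne j i with rfl | hj
    · simp only [Function.update_self]
      ring
    · simp only [Function.update_of_ne hj]
      ring

theorem DoublingWrt.measure_hyperplane [IsLocallyFiniteMeasure μ]
    (hd : DoublingWrt μ {R | IsAxisRect R} Δ) (i : Fin n) (c : ℝ) : μ {x | x i = c} = 0 := by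
  refine measure_null_of_locally_null _ fun z _ => ?_
  have hnhds : openRect (fun j => z j - 1) (fun j => z j + 1) ∈ 𝓝 z :=
    (isOpen_openRect _ _).mem_nhds fun j => ⟨sub_one_lt _, lt_add_one _⟩
  refine ⟨_, inter_mem_nhdsWithin _ hnhds, ?_⟩
  have hlim := ENNReal.Tendsto.const_mul (a := ENNReal.ofReal Δ)
    (tendsto_measure_openRect_update (μ := μ) (fun j => z j - 1) (fun j => z j + 1) i c)
    (Or.inr ENNReal.ofReal_ne_top)
  rw [mul_zero] at hlim
  exact le_zero_iff.1 (ge_of_tendsto hlim (eventually_mem_nhdsWithin.mono fun t ht =>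
    hd.measure_hyperplane_inter_openRect_le z i c ht))

end Doubling

section Halo

open BoxIntegral
open scoped ProbabilityTheory

variable {n : ℕ} {μ : Measure (EuclideanSpace ℝ (Fin n))} {γ : ℝ≥0∞}
  {E K : Set (EuclideanSpace ℝ (Fin n))} {a b a' b' : Fin n → ℝ}

/-- The halo of `E` at level `γ`: the union of all open axis-parallel rectangles in which `E` has
`μ`-density greater than `γ`. -/
def rectHalo (μ : Measure (EuclideanSpace ℝ (Fin n))) (γ : ℝ≥0∞)
    (E : Set (EuclideanSpace ℝ (Fin n))) : Set (EuclideanSpace ℝ (Fin n)) :=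
  {x | γ < maxOp μ {R | IsAxisRect R} (E.indicator 1) x}

theorem isOpen_iterate_rectHalo (hE : IsOpen E) (k : ℕ) : IsOpen ((rectHalo μ γ)^[k] E) := by
  cases k with
  | zero => exact hE
  | succ k =>
    rw [Function.iterate_succ_apply']
    exact isOpen_lt_maxOp (fun _ => IsAxisRect.isOpen) _ _

theorem measure_iterate_rectHalo_le {C : ℝ≥0∞}
    (hC : ∀ E, MeasurableSet E → μ (rectHalo μ γ E) ≤ C * μ E) (hE : IsOpen E) (k : ℕ) :
    μ ((rectHalo μ γ)^[k] E) ≤ C ^ k * μ E := by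
  induction k with
  | zero => simp
  | succ k ih =>
    rw [Function.iterate_succ_apply', pow_succ', mul_assoc]
    exact (hC _ (isOpen_iterate_rectHalo hE k).measurableSet).trans (mul_le_mul' le_rfl ih)

theorem openRect_ae_eq_preimage_box (hnull : ∀ (i : Fin n) (t : ℝ), μ {x | x i = t} = 0)
    (J : Box (Fin n)) : openRect J.lower J.upper =ᵐ[μ] WithLp.ofLp ⁻¹' (J : Set (Fin n → ℝ)) := by
  have hface : ∀ᵐ x ∂μ, ∀ i, x i ≠ J.upper i :=
    ae_all_iff.2 fun i => measure_eq_zero_iff_ae_notMem.1 (hnull i (J.upper i))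
  filter_upwards [hface] with x hx
  exact propext (forall_congr' fun i => and_congr_right fun _ => (hx i).le_iff_lt.symm)

theorem measure_inter_openRect_eq_sum_splitCenterBox
    (hnull : ∀ (i : Fin n) (t : ℝ), μ {x | x i = t} = 0) (hE : MeasurableSet E)
    (J : Box (Fin n)) : μ (E ∩ openRect J.lower J.upper) =
      ∑ s, μ (E ∩ openRect (J.splitCenterBox s).lower (J.splitCenterBox s).upper) := by
  have hbox : ∀ J : Box (Fin n), μ (E ∩ openRect J.lower J.upper) =
      μ (E ∩ WithLp.ofLp ⁻¹' (J : Set (Fin n → ℝ))) := fun J =>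
    measure_congr ((ae_eq_refl E).inter (openRect_ae_eq_preimage_box hnull J))
  simp_rw [hbox]
  rw [← J.iUnion_coe_splitCenterBox, preimage_iUnion, inter_iUnion, measure_iUnion, tsum_fintype]
  · exact fun s t hst => ((J.disjoint_splitCenterBox hst).preimage _).mono
      inter_subset_right inter_subset_right
  · exact fun s => hE.inter ((J.splitCenterBox s).measurableSet_coe.preimage (by fun_prop))

variable [IsLocallyFiniteMeasure μ]

theorem mem_rectHalo_iff (hE : MeasurableSet E) {x : EuclideanSpace ℝ (Fin n)} :
    x ∈ rectHalo μ γ E ↔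
      ∃ a b, x ∈ openRect a b ∧ γ * μ (openRect a b) < μ (E ∩ openRect a b) := by
  have hdensity : ∀ a b, 0 < μ (openRect a b) →
      (γ < μ[|openRect a b] E ↔ γ * μ (openRect a b) < μ (E ∩ openRect a b)) := fun a b hpos => by
    rw [ProbabilityTheory.cond_apply (measurableSet_openRect a b), mul_comm,
      ← div_eq_mul_inv, inter_comm]
    exact ENNReal.lt_div_iff_mul_lt (Or.inl hpos.ne') (Or.inl (measure_openRect_lt_top μ a b).ne)
  refine (lt_maxOp_indicator_iff hE).trans ⟨?_, ?_⟩
  · rintro ⟨_, ⟨a, b, -, rfl⟩, hx, hpos, hlt⟩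
    exact ⟨a, b, hx, (hdensity a b hpos).1 hlt⟩
  · rintro ⟨a, b, hx, hlt⟩
    have hpos : 0 < μ (openRect a b) := hlt.bot_lt.trans_le (measure_mono inter_subset_right)
    exact ⟨_, isAxisRect_openRect fun i => (hx i).1.trans (hx i).2, hx, hpos,
      (hdensity a b hpos).2 hlt⟩

theorem openRect_subset_rectHalo (hE : MeasurableSet E)
    (hlt : γ * μ (openRect a b) < μ (E ∩ openRect a b)) : openRect a b ⊆ rectHalo μ γ E :=
  fun _ hx => (mem_rectHalo_iff hE).2 ⟨a, b, hx, hlt⟩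

theorem openRect_subset_rectHalo_of_subset (hE : MeasurableSet E) (ha : a' ≤ a) (hb : b ≤ b')
    (hsub : openRect a b ⊆ E) (hlt : γ * μ (openRect a' b') < μ (openRect a b)) :
    openRect a' b' ⊆ rectHalo μ γ E :=
  openRect_subset_rectHalo hE
    (hlt.trans_le (measure_mono (subset_inter hsub (openRect_subset_openRect ha hb))))

/-- Once an open set contains one of the `2ⁿ` dyadic children of a rectangle, its `k`-th iterated
halo contains the whole rectangle. Rectangles are presented as `openRect J.lower J.upper` for
`J : BoxIntegral.Box (Fin n)`, so that the children are the boxes `J.splitCenterBox s`. -/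
def AbsorbsDyadicParents (μ : Measure (EuclideanSpace ℝ (Fin n))) (γ : ℝ≥0∞) (k : ℕ) : Prop :=
  ∀ G, IsOpen G → ∀ (J : Box (Fin n)) (s : Set (Fin n)),
    openRect (J.splitCenterBox s).lower (J.splitCenterBox s).upper ⊆ G →
      openRect J.lower J.upper ⊆ (rectHalo μ γ)^[k] G

theorem measure_inter_openRect_le_of_splitCenterBox
    (hnull : ∀ (i : Fin n) (t : ℝ), μ {x | x i = t} = 0) {k : ℕ}
    (hk : AbsorbsDyadicParents μ γ k) (hE : IsOpen E) (hK : MeasurableSet K) (hKE : K ⊆ E)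
    (J : Box (Fin n))
    (hchild : ∀ s, μ (E ∩ openRect (J.splitCenterBox s).lower (J.splitCenterBox s).upper) ≤
        γ * μ (openRect (J.splitCenterBox s).lower (J.splitCenterBox s).upper) →
      μ (K ∩ openRect (J.splitCenterBox s).lower (J.splitCenterBox s).upper) ≤
        γ * μ ((rectHalo μ γ)^[k + 1] E ∩
          openRect (J.splitCenterBox s).lower (J.splitCenterBox s).upper))
    (hsparse : μ (E ∩ openRect J.lower J.upper) ≤ γ * μ (openRect J.lower J.upper)) :
    μ (K ∩ openRect J.lower J.upper) ≤
      γ * μ ((rectHalo μ γ)^[k + 1] E ∩ openRect J.lower J.upper) := by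
  by_cases hdense : ∃ s, γ * μ (openRect (J.splitCenterBox s).lower (J.splitCenterBox s).upper) <
      μ (E ∩ openRect (J.splitCenterBox s).lower (J.splitCenterBox s).upper)
  · obtain ⟨s, hs⟩ := hdense
    have habsorb : openRect J.lower J.upper ⊆ (rectHalo μ γ)^[k + 1] E :=
      hk _ (isOpen_iterate_rectHalo hE 1) J s (openRect_subset_rectHalo hE.measurableSet hs)
    rw [inter_eq_right.2 habsorb]
    exact (measure_mono (inter_subset_inter_left _ hKE)).trans hsparse
  · push Not at hdense
    have hH := (isOpen_iterate_rectHalo (μ := μ) (γ := γ) hE (k + 1)).measurableSet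
    rw [measure_inter_openRect_eq_sum_splitCenterBox hnull hK,
      measure_inter_openRect_eq_sum_splitCenterBox hnull hH, Finset.mul_sum]
    exact Finset.sum_le_sum fun s _ => hchild s (hdense s)

variable [μ.IsOpenPosMeasure]

theorem mul_measure_openRect_lt (hγ : γ < 1) (hab : ∀ i, a i < b i) :
    γ * μ (openRect a b) < μ (openRect a b) := by
  have hne : (openRect a b).Nonempty :=
    ⟨WithLp.toLp 2 fun i => (a i + b i) / 2, fun i =>
      ⟨left_lt_add_div_two.2 (hab i), add_div_two_lt_right.2 (hab i)⟩⟩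
  simpa using ENNReal.mul_lt_mul_left ((isOpen_openRect a b).measure_pos μ hne).ne'
    (measure_openRect_lt_top μ a b).ne hγ

theorem subset_rectHalo (hγ : γ < 1) (hE : IsOpen E) : E ⊆ rectHalo μ γ E := fun x hx => by
  obtain ⟨r, hr, hsub⟩ := exists_openRect_sub_add_subset hE hx
  refine openRect_subset_rectHalo_of_subset hE.measurableSet le_rfl le_rfl hsub
    (mul_measure_openRect_lt hγ fun i => ?_) fun i => ⟨?_, ?_⟩ <;> linarith

theorem monotone_iterate_rectHalo (hγ : γ < 1) (hE : IsOpen E) :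
    Monotone fun k => (rectHalo μ γ)^[k] E := by
  refine monotone_nat_of_le_succ fun k => ?_
  rw [Function.iterate_succ_apply']
  exact subset_rectHalo hγ (isOpen_iterate_rectHalo hE k)

theorem openRect_subset_iterate_rectHalo
    (hnull : ∀ (i : Fin n) (t : ℝ), μ {x | x i = t} = 0) {δ : ℝ≥0∞} (hγδ : γ < δ) (hδ : δ ≤ 1)
    (ha : a' ≤ a) (hb : b ≤ b') (hE : IsOpen E) (hsub : openRect a b ⊆ E) {k : ℕ}
    (hlt : δ ^ k * μ (openRect a' b') < μ (openRect a b)) :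
    openRect a' b' ⊆ (rectHalo μ γ)^[k] E := by
  induction k generalizing E a b with
  | zero =>
    have hle := measure_mono (μ := μ) (openRect_subset_openRect ha hb)
    exact absurd hlt (by simpa using hle)
  | succ k ih =>
    have hcover : ∀ {u v}, u ≤ a → b ≤ v →
        δ * μ (openRect u v) ≤ μ (openRect a b) → openRect u v ⊆ rectHalo μ γ E :=
      fun {u v} hua hbv hle => by
        have hpos : μ (openRect u v) ≠ 0 :=
          (hlt.bot_lt.trans_le (measure_mono (openRect_subset_openRect hua hbv))).ne'
        exact openRect_subset_rectHalo_of_subset hE.measurableSet hua hbv hsub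
          ((ENNReal.mul_lt_mul_left hpos (measure_openRect_lt_top μ u v).ne hγδ).trans_le hle)
    rcases le_total (δ * μ (openRect a' b')) (μ (openRect a b)) with hle | hge
    · exact (hcover ha hb hle).trans
        (monotone_iterate_rectHalo (hγδ.trans_le hδ) hE k.succ_pos)
    · obtain ⟨u, v, hu, hu', hv, hv', huv⟩ := exists_measure_openRect_eq hnull ha hb
        (hδ.trans_lt ENNReal.one_lt_top).ne (mul_le_of_le_one_left' hδ) hge
      refine ih hu hv' (isOpen_iterate_rectHalo hE 1) (hcover hu' hv huv.le) ?_
      rw [← huv, pow_succ', mul_assoc] at hlt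
      exact lt_of_mul_lt_mul_left' hlt

theorem DoublingWrt.exists_absorbsDyadicParents {Δ : ℝ}
    (hd : DoublingWrt μ {R | IsAxisRect R} Δ) (hγ : γ < 1) :
    ∃ k, AbsorbsDyadicParents μ γ k := by
  obtain ⟨δ, hγδ, hδ⟩ := exists_between hγ
  obtain ⟨k, -, hk⟩ := exists_pow_mul_le hδ (ENNReal.ofReal_ne_top (r := Δ)) (ε := 2⁻¹) (by simp)
  refine ⟨k, fun G hG J s hsub => ?_⟩
  obtain ⟨ha, hb⟩ := Box.le_iff_bounds.1 (J.splitCenterBox_le s)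
  refine openRect_subset_iterate_rectHalo hd.measure_hyperplane hγδ hδ.le ha hb hG hsub ?_
  calc δ ^ k * μ (openRect J.lower J.upper)
      ≤ δ ^ k * (ENNReal.ofReal Δ * μ (openRect _ _)) := by
        gcongr
        refine hd.measure_openRect_le (J.splitCenterBox s).lower_lt_upper ha hb fun i => ?_
        rw [J.upper_sub_lower_splitCenterBox]
        ring
    _ ≤ 2⁻¹ * μ (openRect _ _) := by
        rw [← mul_assoc]
        gcongr
    _ < μ (openRect _ _) :=
        mul_measure_openRect_lt ENNReal.one_half_lt_one (J.splitCenterBox s).lower_lt_upper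

theorem exists_nhds_forall_box_measure_inter_openRect_le (hγ : γ < 1) (hE : IsOpen E)
    (hK : IsClosed K) (hKE : K ⊆ E) (H : Set (EuclideanSpace ℝ (Fin n))) (z : Fin n → ℝ) :
    ∃ U ∈ 𝓝 z, ∀ J : Box (Fin n), Box.Icc J ⊆ U →
      μ (E ∩ openRect J.lower J.upper) ≤ γ * μ (openRect J.lower J.upper) →
      μ (K ∩ openRect J.lower J.upper) ≤ γ * μ (H ∩ openRect J.lower J.upper) := by
  have hIcc : ∀ {J : Box (Fin n)} {U}, Box.Icc J ⊆ WithLp.toLp 2 ⁻¹' U →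
      openRect J.lower J.upper ⊆ U := fun {J U} hJ x hx =>
    hJ (⟨fun i => (hx i).1.le, fun i => (hx i).2.le⟩ : x.ofLp ∈ Box.Icc J)
  have hcont := PiLp.continuous_toLp 2 fun _ : Fin n => ℝ
  by_cases hz : WithLp.toLp 2 z ∈ E
  · refine ⟨_, (hE.preimage hcont).mem_nhds hz, fun J hJ hsparse => absurd hsparse ?_⟩
    rw [inter_eq_right.2 (hIcc hJ), not_le]
    exact mul_measure_openRect_lt hγ J.lower_lt_upper
  · refine ⟨_, (hK.isOpen_compl.preimage hcont).mem_nhds fun h => hz (hKE h), fun J hJ _ => ?_⟩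
    simp [(subset_compl_iff_disjoint_left.1 (hIcc hJ)).inter_eq]

theorem measure_inter_openRect_le_mul_measure_iterate_rectHalo
    (hnull : ∀ (i : Fin n) (t : ℝ), μ {x | x i = t} = 0) {k : ℕ}
    (hk : AbsorbsDyadicParents μ γ k) (hγ : γ < 1) (hE : IsOpen E) (hab : ∀ i, a i < b i)
    (hsparse : μ (E ∩ openRect a b) ≤ γ * μ (openRect a b)) :
    μ (E ∩ openRect a b) ≤ γ * μ ((rectHalo μ γ)^[k + 1] E ∩ openRect a b) := by
  rw [(hE.inter (isOpen_openRect a b)).measure_eq_iSup_isCompact]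
  refine iSup₂_le fun K hKE => iSup_le fun hK => ?_
  obtain ⟨hKE, hKR⟩ := subset_inter_iff.1 hKE
  rw [← inter_eq_left.2 hKR]
  refine Box.subbox_induction_on' (p := fun J =>
    μ (E ∩ openRect J.lower J.upper) ≤ γ * μ (openRect J.lower J.upper) →
      μ (K ∩ openRect J.lower J.upper) ≤
        γ * μ ((rectHalo μ γ)^[k + 1] E ∩ openRect J.lower J.upper)) ⟨a, b, hab⟩
    (fun J _ hchild => measure_inter_openRect_le_of_splitCenterBox hnull hk hE hK.measurableSet
      hKE J hchild) (fun z _ => ?_) hsparse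
  obtain ⟨U, hU, hsmall⟩ :=
    exists_nhds_forall_box_measure_inter_openRect_le (μ := μ) hγ hE hK.isClosed hKE _ z
  exact ⟨U, mem_nhdsWithin_of_mem_nhds hU, fun J _ _ _ hJ _ => hsmall J hJ⟩

theorem openRect_subset_iterate_rectHalo_of_pow_mul_lt
    (hnull : ∀ (i : Fin n) (t : ℝ), μ {x | x i = t} = 0) {k : ℕ}
    (hk : AbsorbsDyadicParents μ γ k) (hγ : γ < 1) (hE : IsOpen E) (hab : ∀ i, a i < b i) {m : ℕ}
    (hlt : γ ^ m * μ (openRect a b) < μ (E ∩ openRect a b)) :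
    openRect a b ⊆ (rectHalo μ γ)^[(k + 1) * m] E := by
  induction m generalizing E with
  | zero => exact absurd hlt (by simpa using measure_mono (μ := μ) inter_subset_right)
  | succ m ih =>
    rcases lt_or_ge (γ * μ (openRect a b)) (μ (E ∩ openRect a b)) with hdense | hsparse
    · exact (openRect_subset_rectHalo hE.measurableSet hdense).trans
        (monotone_iterate_rectHalo hγ hE (Nat.one_le_iff_ne_zero.2 (by simp)))
    · have hgain :=
        measure_inter_openRect_le_mul_measure_iterate_rectHalo hnull hk hγ hE hab hsparse
      rw [pow_succ', mul_assoc] at hlt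
      rw [Nat.mul_succ, Function.iterate_add_apply]
      exact ih (isOpen_iterate_rectHalo hE (k + 1)) (lt_of_mul_lt_mul_left' (hlt.trans_le hgain))

theorem measure_rectHalo_pow_le (hnull : ∀ (i : Fin n) (t : ℝ), μ {x | x i = t} = 0) {k : ℕ}
    (hk : AbsorbsDyadicParents μ γ k) (hγ : γ < 1) {C : ℝ≥0∞} (hC : C ≠ ⊤)
    (hTauberian : ∀ E, MeasurableSet E → μ (rectHalo μ γ E) ≤ C * μ E) (m : ℕ)
    (hE : MeasurableSet E) : μ (rectHalo μ (γ ^ m) E) ≤ (C ^ (k + 1)) ^ m * μ E := by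
  have hC' : (C ^ (k + 1)) ^ m ≠ ⊤ := by finiteness
  have : ((C ^ (k + 1)) ^ m • μ).OuterRegular := Measure.OuterRegular.smul μ hC'
  rw [← smul_eq_mul, ← Measure.smul_apply, E.measure_eq_iInf_isOpen]
  refine le_iInf₂ fun U hEU => le_iInf fun hU => ?_
  rw [Measure.smul_apply, smul_eq_mul, ← pow_mul]
  refine (measure_mono fun x hx => ?_).trans (measure_iterate_rectHalo_le hTauberian hU _)
  obtain ⟨a, b, hxR, hlt⟩ := (mem_rectHalo_iff hE).1 hx
  exact openRect_subset_iterate_rectHalo_of_pow_mul_lt hnull hk hγ hU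
    (fun i => (hxR i).1.trans (hxR i).2) (hlt.trans_le (by gcongr)) hxR

end Halo

theorem statement0_general (n : ℕ) (μ : Measure (EuclideanSpace ℝ (Fin n)))
    [IsLocallyFiniteMeasure μ] (hμ : μ ≠ 0) {Δ : ℝ} (hd : DoublingWrt μ {R | IsAxisRect R} Δ)
    {γ : ℝ} (hγ : 0 < γ) (hγ' : γ < 1) :
    (∃ c, 0 < c ∧ TauberianCond μ μ {R | IsAxisRect R} γ c) ↔
      ∃ p, 1 < p ∧ BoundedOnLp μ μ {R | IsAxisRect R} p := by
  have hopen : ∀ R ∈ {R : Set (EuclideanSpace ℝ (Fin n)) | IsAxisRect R}, IsOpen R :=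
    fun _ => IsAxisRect.isOpen
  refine ⟨fun ⟨c, _, hTauberian⟩ => ?_, fun ⟨p, hp, hbdd⟩ =>
    hbdd.exists_tauberianCond hopen (one_pos.trans hp) hγ⟩
  have := hd.isOpenPosMeasure hμ
  have hγ1 : ENNReal.ofReal γ < 1 := ENNReal.ofReal_lt_one.2 hγ'
  obtain ⟨k, hk⟩ := hd.exists_absorbsDyadicParents hγ1
  exact exists_boundedOnLp_of_measure_pow_lt_maxOp_le hopen hγ1
    (K := ENNReal.ofReal c ^ (k + 1)) (by finiteness) fun m E hE =>
      measure_rectHalo_pow_le hd.measure_hyperplane hk hγ1 ENNReal.ofReal_ne_top hTauberian m hE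

/-- For a nonzero locally finite Borel measure `μ` on `ℝⁿ`, doubling with
respect to the collection `𝔑` of all axis-parallel open rectangles, the Tauberian
condition at level `1/2` for `M_{𝔑,μ}` (with respect to `μ`) holds if and only if
`M_{𝔑,μ}` is bounded on `L^p(μ)` for some `p > 1`. -/
theorem statement0 (n : ℕ) (μ : Measure (EuclideanSpace ℝ (Fin n)))
    (hloc : IsLocallyFiniteMeasure μ) (hμ : μ ≠ 0)
    (hdbl : ∃ Δ : ℝ, 1 < Δ ∧ DoublingWrt μ {R | IsAxisRect R} Δ) :
    (∃ c : ℝ, 0 < c ∧ ∀ E : Set (EuclideanSpace ℝ (Fin n)), MeasurableSet E →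
        μ {x | (1 / 2 : ℝ≥0∞) < maxOp μ {R | IsAxisRect R} (E.indicator 1) x}
          ≤ ENNReal.ofReal c * μ E)
    ↔ (∃ p : ℝ, 1 < p ∧ BoundedOnLp μ μ {R | IsAxisRect R} p) := by
  obtain ⟨Δ, -, hd⟩ := hdbl
  simpa [TauberianCond] using
    statement0_general n μ hμ hd (γ := 1 / 2) (by norm_num) (by norm_num)
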